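/- Let G = (V,E) be an MPDAG and let (C_1,…,C_k) be an ordered bucket decomposition of V in G. Then for any i, j ∈ {1,…,k} with i < j, there is no DAG in [G] containing a causal path from C_j to C_i. -/

import Mathlib

open scoped Classical

namespace CausalMPDAG

/-- A partially directed graph: a directed edge relation `dir` (`dir a b` means `a → b`)
and an undirected edge relation `undir` (`a − b`). -/
structure PDGraph (V : Type*) where
  dir : V → V → Prop
  undir : V → V → Prop

namespace PDGraph

variable {V : Type*}

/-- adjacency -/
def adj (g : PDGraph V) (a b : V) : Prop :=
  g.dir a b ∨ g.dir b a ∨ g.undir a b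

/-- `g` is a partially directed acyclic graph: `undir` symmetric and irreflexive,
`dir` irreflexive, at most one edge between two nodes, and no directed cycles. -/
def IsPDAG (g : PDGraph V) : Prop :=
  (∀ a b, g.undir a b → g.undir b a) ∧
  (∀ a, ¬ g.dir a a) ∧
  (∀ a, ¬ g.undir a a) ∧
  (∀ a b, g.dir a b → ¬ g.undir a b) ∧
  (∀ a b, g.dir a b → ¬ g.dir b a) ∧
  (∀ a, ¬ Relation.TransGen g.dir a a)

/-- a DAG is a PDAG with only directed edges -/
def IsDAG (g : PDGraph V) : Prop :=
  g.IsPDAG ∧ ∀ a b, ¬ g.undir a b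

/-- Closure under Meek's orientation rules R1–R4 (no rule can orient a further
undirected edge). -/
def MeekClosed (g : PDGraph V) : Prop :=
  -- R1: a → b − c with a, c nonadjacent would orient b → c
  (∀ a b c, g.dir a b → g.undir b c → g.adj a c) ∧
  -- R2: a → b → c with a − c would orient a → c
  (∀ a b c, g.dir a b → g.dir b c → ¬ g.undir a c) ∧
  -- R3: a − b, a − c, c → b, a − d, d → b with c, d nonadjacent would orient a → b
  (∀ a b c d, g.undir a b → g.undir a c → g.dir c b → g.undir a d → g.dir d b →
    g.adj c d) ∧
  -- R4: a − b, a − c, c → d, d → b with a, d adjacent and b, c nonadjacent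
  -- would orient a → b
  (∀ a b c d, g.undir a b → g.undir a c → g.dir c d → g.dir d b → g.adj a d →
    g.adj c b)

/-- A maximally oriented PDAG: a PDAG closed under Meek's rules R1–R4. -/
def IsMPDAG (g : PDGraph V) : Prop := g.IsPDAG ∧ g.MeekClosed

/-- an unshielded collider `a → b ← c` with `a`, `c` nonadjacent -/
def UnshieldedCollider (g : PDGraph V) (a b c : V) : Prop :=
  g.dir a b ∧ g.dir c b ∧ a ≠ c ∧ ¬ g.adj a c

/-- `g.Represents d` : the DAG `d` belongs to the class `[g]` of DAGs represented by the
MPDAG `g`: `d` is a DAG with the same adjacencies and directed edges as `g` and with no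
unshielded colliders other than those of `g`. -/
def Represents (g d : PDGraph V) : Prop :=
  d.IsDAG ∧
  (∀ a b, d.adj a b ↔ g.adj a b) ∧
  (∀ a b, g.dir a b → d.dir a b) ∧
  (∀ a b c, d.UnshieldedCollider a b c → g.UnshieldedCollider a b c)

/-- `G_{X̄}` : remove all edges into `X` -/
def removeInto (g : PDGraph V) (X : Set V) : PDGraph V where
  dir a b := g.dir a b ∧ b ∉ X
  undir := g.undir

/-- `G_{Z̲}` : remove all edges out of `Z` -/
def removeOutOf (g : PDGraph V) (Z : Set V) : PDGraph V where
  dir a b := g.dir a b ∧ a ∉ Z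
  undir := g.undir

/-- induced subgraph on the node set `S` -/
def induce (g : PDGraph V) (S : Set V) : PDGraph V where
  dir a b := g.dir a b ∧ a ∈ S ∧ b ∈ S
  undir a b := g.undir a b ∧ a ∈ S ∧ b ∈ S

/-- a path: a nonempty list of distinct nodes in which successive nodes are adjacent -/
def IsPath (g : PDGraph V) (p : List V) : Prop :=
  p ≠ [] ∧ p.Nodup ∧ p.Chain' g.adj

/-- a causal (directed) path `V₀ → ⋯ → V_k` -/
def IsCausal (g : PDGraph V) (p : List V) : Prop :=
  p ≠ [] ∧ p.Nodup ∧ p.Chain' g.dir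

/-- a possibly causal path: a path `⟨V₀,…,V_k⟩` such that `g` contains no edge
`V_i ← V_j` for `i < j` -/
def IsPossiblyCausal (g : PDGraph V) (p : List V) : Prop :=
  g.IsPath p ∧ ∀ i j : Fin p.length, (i : ℕ) < (j : ℕ) → ¬ g.dir (p.get j) (p.get i)

/-- the path starts with an undirected edge -/
def StartsUndirected (g : PDGraph V) : List V → Prop
  | a :: b :: _ => g.undir a b
  | _ => False

/-- every triple of consecutive nodes on the path has nonadjacent outer nodes -/
def Unshielded (g : PDGraph V) (p : List V) : Prop :=
  ∀ (i : ℕ) (a c : V), p[i]? = some a → p[i + 2]? = some c → ¬ g.adj a c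

/-- there is a possibly causal path from `a` to `b` (possibly trivial) -/
def PossCausalConn (g : PDGraph V) (a b : V) : Prop :=
  ∃ p : List V, g.IsPossiblyCausal p ∧ p.head? = some a ∧ p.getLast? = some b

/-- possible descendants of `X` (every node is a possible descendant of itself) -/
def possDe (g : PDGraph V) (X : Set V) : Set V := {b | ∃ a ∈ X, g.PossCausalConn a b}

/-- possible ancestors of `W` (every node is a possible ancestor of itself) -/
def possAn (g : PDGraph V) (W : Set V) : Set V := {a | ∃ b ∈ W, g.PossCausalConn a b}

/-- ancestors of `Y` (via causal paths; every node is an ancestor of itself) -/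
def an (g : PDGraph V) (Y : Set V) : Set V :=
  {a | ∃ b ∈ Y, Relation.ReflTransGen g.dir a b}

/-- descendants of `X` (via causal paths; every node is a descendant of itself) -/
def de (g : PDGraph V) (X : Set V) : Set V :=
  {b | ∃ a ∈ X, Relation.ReflTransGen g.dir a b}

/-- `Pa(B,G)`: parents of nodes of `B` that lie outside `B` -/
def paSet (g : PDGraph V) (B : Set V) : Set V :=
  {a | a ∉ B ∧ ∃ b ∈ B, g.dir a b}

/-- the node at (non-endpoint) position `i` of `p` is a collider on `p` -/
def ColliderAt (g : PDGraph V) (p : List V) (i : ℕ) : Prop :=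
  0 < i ∧ ∃ a b c, p[i - 1]? = some a ∧ p[i]? = some b ∧ p[i + 1]? = some c ∧
    g.dir a b ∧ g.dir c b

/-- the node at (non-endpoint) position `i` of `p` is a definite non-collider on `p` -/
def DefNonColliderAt (g : PDGraph V) (p : List V) (i : ℕ) : Prop :=
  0 < i ∧ ∃ a b c, p[i - 1]? = some a ∧ p[i]? = some b ∧ p[i + 1]? = some c ∧
    (g.dir b a ∨ g.dir b c ∨ (g.undir a b ∧ g.undir b c ∧ ¬ g.adj a c))

/-- every non-endpoint node of the path is a collider or a definite non-collider -/
def DefiniteStatus (g : PDGraph V) (p : List V) : Prop :=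
  ∀ i : ℕ, 0 < i → i + 1 < p.length → g.ColliderAt p i ∨ g.DefNonColliderAt p i

/-- the definite status path `p` is d-connecting given `Z`: every definite non-collider
is outside `Z` and every collider has a descendant in `Z` -/
def DConn (g : PDGraph V) (Z : Set V) (p : List V) : Prop :=
  g.DefiniteStatus p ∧
  (∀ (i : ℕ) (b : V), g.DefNonColliderAt p i → p[i]? = some b → b ∉ Z) ∧
  (∀ (i : ℕ) (b : V), g.ColliderAt p i → p[i]? = some b →
    ∃ z ∈ Z, Relation.ReflTransGen g.dir b z)

/-- `X ⊥_d Y | Z` : every definite status path between `X` and `Y` is blocked given `Z` -/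
def DSep (g : PDGraph V) (X Y Z : Set V) : Prop :=
  ∀ p : List V, g.IsPath p →
    (((∃ a ∈ X, p.head? = some a) ∧ ∃ b ∈ Y, p.getLast? = some b) ∨
     ((∃ a ∈ Y, p.head? = some a) ∧ ∃ b ∈ X, p.getLast? = some b)) →
    ¬ g.DConn Z p

/-- connectedness by undirected paths -/
def uconn (g : PDGraph V) : V → V → Prop := Relation.ReflTransGen g.undir

/-- `B` is a bucket in `D`: the (nonempty) intersection of `D` with a maximal
undirected-connected node set of `g` -/
def IsBucket (g : PDGraph V) (D B : Set V) : Prop :=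
  B.Nonempty ∧ B ⊆ D ∧ (∀ a ∈ B, ∀ b ∈ B, g.uconn a b) ∧
  ∀ a ∈ B, ∀ d ∈ D, g.uconn a d → d ∈ B

/-- an ordered bucket decomposition of `D` in `g`; the output `PCO(D,G)` of the partial
causal ordering algorithm is such a decomposition -/
def IsOBD (g : PDGraph V) (D : Set V) (Bs : List (Set V)) : Prop :=
  (∀ B ∈ Bs, g.IsBucket D B) ∧
  (∀ a : V, a ∈ D ↔ ∃ i : Fin Bs.length, a ∈ Bs.get i) ∧
  List.Pairwise (fun A B => Disjoint A B) Bs ∧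
  ∀ i j : Fin Bs.length, (i : ℕ) < (j : ℕ) →
    ∀ a ∈ Bs.get i, ∀ b ∈ Bs.get j, g.adj a b → g.dir a b

end PDGraph

/-- the path is proper w.r.t. `X`: the first node is in `X` and no other node is -/
def ProperFrom {V : Type*} (X : Set V) (p : List V) : Prop :=
  (∃ a ∈ X, p.head? = some a) ∧ ∀ i : Fin p.length, 0 < (i : ℕ) → p.get i ∉ X

/-- the last node of the path lies in `Y` -/
def EndsIn {V : Type*} (Y : Set V) (p : List V) : Prop :=
  ∃ b ∈ Y, p.getLast? = some b

section Density

variable {V Val : Type*} [Fintype V] [DecidableEq V] [Fintype Val]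

/-- marginal of the (discrete) density `f` over the coordinates outside `S`,
evaluated at the values `v` on `S` -/
noncomputable def margDens (f : (V → Val) → ℝ) (S : Set V) (v : V → Val) : ℝ :=
  ∑ w : V → Val, if ∀ i ∈ S, w i = v i then f w else 0

/-- conditional density `f(a | b)` of the variables `A` given the variables `B` -/
noncomputable def condDens (f : (V → Val) → ℝ) (A B : Set V) (v : V → Val) : ℝ :=
  margDens f (A ∪ B) v / margDens f B v

/-- A family `F` of interventional densities (`F X v` is `f(v | do(x))` with the
intervention values read off `v` on `X`) is compatible with the causal DAG `d`:
the truncated factorization holds. -/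
def Compatible (d : PDGraph V) (F : Set V → (V → Val) → ℝ) : Prop :=
  ∀ (X : Set V) (v : V → Val),
    F X v = ∏ i : V, if i ∈ X then 1 else condDens (F ∅) {i} {a | d.dir a i} v

/-- the interventional family is consistent with the causal MPDAG `g`: it is compatible
with every DAG in `[g]` -/
def ConsistentFam (g : PDGraph V) (F : Set V → (V → Val) → ℝ) : Prop :=
  ∀ d : PDGraph V, g.Represents d → Compatible d F

end Density

/-- The conditional causal effect of `X` on `Y` given `Z` is identifiable in the causal
MPDAG `g`: any two positive interventional families compatible with DAGs in `[g]` whose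
observational densities agree yield the same `f(y | do(x), z)`. -/
def Identifiable (Val : Type*) [Fintype Val] {V : Type*} [Fintype V] [DecidableEq V]
    (g : PDGraph V) (X Y Z : Set V) : Prop :=
  ∀ (d₁ d₂ : PDGraph V) (F₁ F₂ : Set V → (V → Val) → ℝ),
    g.Represents d₁ → g.Represents d₂ →
    Compatible d₁ F₁ → Compatible d₂ F₂ →
    (∀ v, 0 < F₁ ∅ v) → (∀ v, 0 < F₂ ∅ v) →
    F₁ ∅ = F₂ ∅ →
    ∀ v : V → Val, condDens (F₁ X) Y (Z ∪ X) v = condDens (F₂ X) Y (Z ∪ X) v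


namespace PDGraph

variable {V ι : Type*} {g d : PDGraph V}

/-- `d.Refines g`: `d` arises from `g` by orienting some of its undirected edges, that is, `d` has
the skeleton of `g` and keeps every directed edge of `g`. It covers the DAGs in `[g]` as well as the
partially directed graphs obtained from `g` by adding background knowledge. -/
def Refines (d g : PDGraph V) : Prop :=
  (∀ a b, d.adj a b ↔ g.adj a b) ∧ ∀ a b, g.dir a b → d.dir a b

/-- A layering of `g`: a family of node sets, indexed by an ordered type, that covers all nodes and
such that every edge between two layers points to the layer of larger index. This is the
order-theoretic part of an ordered bucket decomposition of all nodes; layers may overlap. -/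
def IsLayering [LT ι] (g : PDGraph V) (C : ι → Set V) : Prop :=
  (∀ v, ∃ i, v ∈ C i) ∧
  ∀ ⦃i j⦄, i < j → ∀ ⦃a b⦄, a ∈ C i → b ∈ C j → g.adj a b → g.dir a b

lemma Represents.isPDAG (hd : g.Represents d) : d.IsPDAG :=
  hd.1.1

lemma Represents.refines (hd : g.Represents d) : d.Refines g :=
  ⟨hd.2.1, hd.2.2.1⟩

lemma IsPDAG.not_dir_of_dir (hd : d.IsPDAG) {a b : V} (hab : d.dir a b) : ¬ d.dir b a :=
  hd.2.2.2.2.1 a b hab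

lemma IsOBD.isLayering {Bs : List (Set V)} (hBs : g.IsOBD Set.univ Bs) : g.IsLayering Bs.get :=
  ⟨fun v ↦ (hBs.2.1 v).1 (Set.mem_univ v),
    fun i j hij a b ha hb ↦ hBs.2.2.2 i j hij a ha b hb⟩

lemma IsLayering.of_refines [LT ι] {C : ι → Set V} (hC : g.IsLayering C) (hdg : d.Refines g) :
    d.IsLayering C :=
  ⟨hC.1, fun _ _ hij a b ha hb hab ↦ hdg.2 a b (hC.2 hij ha hb ((hdg.1 a b).1 hab))⟩

section LinearOrder

variable [LinearOrder ι] {C : ι → Set V} {i j : ι} {a b : V}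

lemma IsLayering.le_of_dir (hC : d.IsLayering C) (hd : d.IsPDAG) (ha : a ∈ C i) (hb : b ∈ C j)
    (hab : d.dir a b) : i ≤ j := by
  by_contra! hji
  have hba : d.dir b a := hC.2 hji hb ha (.inr (.inl hab))
  exact hd.not_dir_of_dir hab hba

lemma IsLayering.le_of_transGen_dir (hC : d.IsLayering C) (hd : d.IsPDAG) (ha : a ∈ C i)
    (hb : b ∈ C j) (hab : Relation.TransGen d.dir a b) : i ≤ j := by
  induction hab generalizing j with
  | single hab => exact hC.le_of_dir hd ha hb hab
  | @tail c _ _ hcb ih =>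
    obtain ⟨k, hc⟩ := hC.1 c
    exact (ih hc).trans (hC.le_of_dir hd hc hb hcb)

end LinearOrder

end PDGraph

theorem no_backward_causal_in_represented_dag_general
    {V ι : Type*} [LinearOrder ι] {g d : PDGraph V} {C : ι → Set V} (hC : g.IsLayering C)
    (hd : d.IsPDAG) (hdg : d.Refines g) {i j : ι} (hij : i < j) {a b : V}
    (ha : a ∈ C j) (hb : b ∈ C i) : ¬ Relation.TransGen d.dir a b :=
  fun hab ↦ hij.not_ge ((hC.of_refines hdg).le_of_transGen_dir hd ha hb hab)

/-- Corollary: no backward causal paths in any DAG of `[G]` among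
ordered buckets. If `(C_1,…,C_k)` is an ordered bucket decomposition of the node set
of the MPDAG `G`, then for `i < j` no DAG in `[G]` contains a causal path from `C_j`
to `C_i`. -/
theorem no_backward_causal_in_represented_dag
    {V : Type*} (g : PDGraph V) (hG : g.IsMPDAG)
    (Bs : List (Set V)) (hBs : g.IsOBD Set.univ Bs)
    (i j : Fin Bs.length) (hij : (i : ℕ) < (j : ℕ)) :
    ∀ d : PDGraph V, g.Represents d →
      ∀ a ∈ Bs.get j, ∀ b ∈ Bs.get i, ¬ Relation.TransGen d.dir a b := by
  intro d hd a ha b hb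
  exact no_backward_causal_in_represented_dag_general hBs.isLayering hd.isPDAG hd.refines hij ha hb

end CausalMPDAG
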